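/- arXiv:math/0304410 — 3 statements merged into one kernel-verified Lean document; each statement's English description precedes it below -/
import Mathlib

section
/- There exists a 22×22 matrix with all entries equal to 1 or -1 whose determinant equals 2^23 · 5^11. Consequently md(22) ≥ 2^23 · 5^11. -/
/-- `md n` is the maximal determinant of an `n × n` matrix all of whose
entries are `1` or `-1`. -/
noncomputable def md (n : ℕ) : ℤ :=
  sSup {d : ℤ | ∃ M : Matrix (Fin n) (Fin n) ℤ,
    (∀ i j, M i j = 1 ∨ M i j = -1) ∧ M.det = d}

/-!
When its last two blocks commute, a block matrix `A B; C D` has determinant `det (A D - B C)`; so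
for commuting `P` and `F` the matrix `P F; -F P` has determinant `det (P ^ 2 + F ^ 2)`. Here `P` and
`F` are sign matrices of order `11` with first row and column `(1, w)`, where `w` is balanced and
is annihilated by both interiors. The interior of `P` is built from the matrix `Q` of Legendre
symbols modulo `5`, that of `F` from `J - 2`, with `J` the all-ones matrix of order `5`. As
`Q ^ 2 = 5 - J` and `(J - 2) ^ 2 = J + 4`, the interior of `P ^ 2 + F ^ 2` is `20` plus twice the
all-ones matrix of order `10`. It has determinant `2 * 20 ^ 10` and `w` is an eigenvector for `20`;
clearing the border `2 w` against the corner `22` gives `det (P ^ 2 + F ^ 2) = 20 * 2 * 20 ^ 10`.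
-/

section BlockDeterminants

open Matrix Polynomial

variable {n R : Type*} [Fintype n] [DecidableEq n] [CommRing R]

theorem det_fromBlocks_mul_det_of_commute (A B : Matrix n n R) {C D : Matrix n n R}
    (hCD : Commute C D) :
    (fromBlocks A B C D).det * D.det = (A * D - B * C).det * D.det := by
  have hmul : fromBlocks A B C D * fromBlocks D 0 (-C) 1 = fromBlocks (A * D - B * C) B 0 D := by
    simp [fromBlocks_multiply, hCD.eq, sub_eq_add_neg]
  simpa using congrArg det hmul

/- Replacing `D` by `D + X` over `R[X]` makes its determinant monic, hence cancellable; the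
identity is then evaluated at `X = 0`. -/
theorem det_fromBlocks_of_commute (A B : Matrix n n R) {C D : Matrix n n R}
    (hCD : Commute C D) : (fromBlocks A B C D).det = (A * D - B * C).det := by
  let constant : Matrix n n R →+* Matrix n n R[X] := Polynomial.C.mapMatrix
  let evalZero : R[X] →+* R := Polynomial.evalRingHom 0
  have eval_constant (N : Matrix n n R) : (constant N).map evalZero = N := by
    ext; simp [evalZero, constant]
  have eval_charmatrix : (charmatrix (-D)).map evalZero = D := by
    ext i j; by_cases hij : i = j <;> simp [evalZero, charmatrix, hij]
  have hcomm : Commute (constant C) (charmatrix (-D)) :=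
    ((scalar_commute X (Commute.all X) _).symm).sub_right (hCD.neg_right.map constant)
  have hdet : (fromBlocks (constant A) (constant B) (constant C) (charmatrix (-D))).det =
      (constant A * charmatrix (-D) - constant B * constant C).det :=
    (charpoly_monic (-D)).isRegular.right (det_fromBlocks_mul_det_of_commute _ _ hcomm)
  have heval := congrArg evalZero hdet
  rw [RingHom.map_det, RingHom.map_det, map_sub, map_mul, map_mul] at heval
  simpa only [RingHom.mapMatrix_apply, fromBlocks_map, eval_constant, eval_charmatrix] using heval

theorem det_scalar_add_vecMulVec (c : R) (u v : n → R) :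
    (scalar n c + vecMulVec u v).det =
      c ^ Fintype.card n + (u ⬝ᵥ v) * c ^ (Fintype.card n - 1) := by
  simpa [neg_vecMulVec, eval_charpoly] using
    congrArg (Polynomial.eval c) (charpoly_vecMulVec (-u) v)

theorem mul_det_fromBlocks_of_mulVec_eq_smul (a : R) (u : n → R) {w : n → R} {D : Matrix n n R}
    {c : R} (hw : D *ᵥ w = c • w) :
    c * (fromBlocks (scalar Unit a) (replicateRow Unit u) (replicateCol Unit w) D).det =
      (c * a - u ⬝ᵥ w) * D.det := by
  have hmul : fromBlocks (scalar Unit a) (replicateRow Unit u) (replicateCol Unit w) D *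
      fromBlocks (scalar Unit c) 0 (-replicateCol Unit w) 1 =
      fromBlocks (scalar Unit (c * a - u ⬝ᵥ w)) (replicateRow Unit u) 0 D := by
    have hcol : D * replicateCol Unit w = replicateCol Unit w * scalar Unit c := by
      rw [← replicateCol_mulVec, hw]
      ext; simp [mul_comm]
    rw [fromBlocks_multiply]
    congr 1
    · ext; simp [mul_comm, sub_eq_add_neg]
    · simp
    · simp [hcol]
    · simp
  simpa [mul_comm] using congrArg det hmul

end BlockDeterminants

section SignMatrices

variable {m n o p : Type*}

/-- Every entry of the integer matrix `M` is `1` or `-1`. -/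
def IsSignMatrix (M : Matrix m n ℤ) : Prop :=
  ∀ i j, M i j = 1 ∨ M i j = -1

namespace IsSignMatrix

theorem neg {M : Matrix m n ℤ} (hM : IsSignMatrix M) : IsSignMatrix (-M) := fun i j => by
  simpa [neg_eq_iff_eq_neg] using (hM i j).symm

theorem reindex {M : Matrix m n ℤ} (hM : IsSignMatrix M) (e : m ≃ o) (f : n ≃ p) :
    IsSignMatrix (M.reindex e f) :=
  fun i j => hM (e.symm i) (f.symm j)

theorem fromBlocks {A : Matrix m n ℤ} {B : Matrix m p ℤ} {C : Matrix o n ℤ} {D : Matrix o p ℤ}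
    (hA : IsSignMatrix A) (hB : IsSignMatrix B) (hC : IsSignMatrix C) (hD : IsSignMatrix D) :
    IsSignMatrix (Matrix.fromBlocks A B C D)
  | .inl i, .inl j => hA i j
  | .inl i, .inr j => hB i j
  | .inr i, .inl j => hC i j
  | .inr i, .inr j => hD i j

theorem det_le_factorial [Fintype n] [DecidableEq n] {M : Matrix n n ℤ} (hM : IsSignMatrix M) :
    M.det ≤ (Fintype.card n).factorial := by
  have habs : ∀ i j, AbsoluteValue.abs (M i j) ≤ 1 := fun i j => by
    rcases hM i j with h | h <;> simp [h]
  simpa using (le_abs_self M.det).trans (Matrix.det_le habs)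

theorem det_le_md {k : ℕ} {M : Matrix (Fin k) (Fin k) ℤ} (hM : IsSignMatrix M) :
    M.det ≤ md k := by
  refine le_csSup ⟨(Fintype.card (Fin k)).factorial, ?_⟩ ⟨M, hM, rfl⟩
  rintro _ ⟨N, hN, rfl⟩
  exact det_le_factorial hN

end IsSignMatrix

end SignMatrices

section BorderedMatrices

open Matrix

variable {n R : Type*} [Semiring R]

/-- The matrix `N` bordered by the vector `w` on the top and on the left, with corner entry `1`. -/
def bordered (w : n → R) (N : Matrix n n R) : Matrix (Unit ⊕ n) (Unit ⊕ n) R :=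
  fromBlocks 1 (replicateRow Unit w) (replicateCol Unit w) N

theorem bordered_mul_bordered [Fintype n] {w : n → R} {N N' : Matrix n n R} (hN : N *ᵥ w = 0)
    (hN' : w ᵥ* N' = 0) :
    bordered w N * bordered w N' = fromBlocks (scalar Unit (1 + w ⬝ᵥ w)) (replicateRow Unit w)
      (replicateCol Unit w) (vecMulVec w w + N * N') := by
  rw [bordered, bordered, fromBlocks_multiply]
  congr 1
  · ext; simp
  · simp [← replicateRow_vecMul, hN']
  · simp [← replicateCol_mulVec, hN]
  · simp [vecMulVec_eq Unit]

theorem commute_bordered [Fintype n] {w : n → R} {N N' : Matrix n n R} (h : Commute N N')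
    (hN : N *ᵥ w = 0) (hN₂ : w ᵥ* N = 0) (hN' : N' *ᵥ w = 0) (hN'₂ : w ᵥ* N' = 0) :
    Commute (bordered w N) (bordered w N') := by
  rw [commute_iff_eq, bordered_mul_bordered hN hN'₂, bordered_mul_bordered hN' hN₂, h.eq]

theorem IsSignMatrix.bordered {w : n → ℤ} {N : Matrix n n ℤ} (hw : ∀ i, w i = 1 ∨ w i = -1)
    (hN : IsSignMatrix N) : IsSignMatrix (bordered w N) :=
  .fromBlocks (fun _ _ => .inl rfl) (fun _ j => hw j) (fun i _ => hw i) hN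

end BorderedMatrices

section OrderTwentyTwo

open Matrix

/-- The Paley core of order `5`: its entries are the Legendre symbols of `i - j` modulo `5`. -/
def paleyCore : Matrix (Fin 5) (Fin 5) ℤ :=
  circulant ![0, 1, -1, -1, 1]

/-- The sign matrix `J - 2` of order `5`, where `J` is the all-ones matrix: `-1` on the diagonal
and `1` elsewhere. -/
def diagonalFlip : Matrix (Fin 5) (Fin 5) ℤ :=
  vecMulVec 1 1 - 2

theorem paleyCore_mul_paleyCore : paleyCore * paleyCore = 5 • 1 - vecMulVec 1 1 := by
  decide +kernel

theorem diagonalFlip_mul_diagonalFlip :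
    diagonalFlip * diagonalFlip = vecMulVec 1 1 + 4 • 1 := by
  decide +kernel

theorem isSignMatrix_one_sub_paleyCore : IsSignMatrix (1 - paleyCore) := fun i j => by
  fin_cases i <;> fin_cases j <;> decide

theorem isSignMatrix_one_add_paleyCore : IsSignMatrix (1 + paleyCore) := fun i j => by
  fin_cases i <;> fin_cases j <;> decide

theorem isSignMatrix_diagonalFlip : IsSignMatrix diagonalFlip := fun i j => by
  fin_cases i <;> fin_cases j <;> decide

/-- The border of the blocks of the record matrix: five entries `1`, then five entries `-1`. -/
def balancedSign : Fin 5 ⊕ Fin 5 → ℤ :=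
  Sum.elim 1 (-1)

/-- The interior of the diagonal blocks of the record matrix. -/
def paleyBlock : Matrix (Fin 5 ⊕ Fin 5) (Fin 5 ⊕ Fin 5) ℤ :=
  fromBlocks (1 - paleyCore) (1 + paleyCore) (1 + paleyCore) (1 - paleyCore)

/-- The interior of the off-diagonal blocks of the record matrix. -/
def flipBlock : Matrix (Fin 5 ⊕ Fin 5) (Fin 5 ⊕ Fin 5) ℤ :=
  fromBlocks diagonalFlip diagonalFlip diagonalFlip diagonalFlip

theorem balancedSign_eq_one_or_neg_one : ∀ i, balancedSign i = 1 ∨ balancedSign i = -1 := by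
  decide

theorem isSignMatrix_paleyBlock : IsSignMatrix paleyBlock :=
  isSignMatrix_one_sub_paleyCore.fromBlocks isSignMatrix_one_add_paleyCore
    isSignMatrix_one_add_paleyCore isSignMatrix_one_sub_paleyCore

theorem isSignMatrix_flipBlock : IsSignMatrix flipBlock :=
  isSignMatrix_diagonalFlip.fromBlocks isSignMatrix_diagonalFlip
    isSignMatrix_diagonalFlip isSignMatrix_diagonalFlip

theorem balancedSign_dotProduct_self : balancedSign ⬝ᵥ balancedSign = 10 := by
  decide

theorem one_dotProduct_balancedSign : 1 ⬝ᵥ balancedSign = 0 := by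
  decide

theorem paleyBlock_mulVec_balancedSign : paleyBlock *ᵥ balancedSign = 0 := by
  decide +kernel

theorem balancedSign_vecMul_paleyBlock : balancedSign ᵥ* paleyBlock = 0 := by
  decide +kernel

theorem flipBlock_mulVec_balancedSign : flipBlock *ᵥ balancedSign = 0 := by
  decide +kernel

theorem balancedSign_vecMul_flipBlock : balancedSign ᵥ* flipBlock = 0 := by
  decide +kernel

theorem commute_paleyBlock_flipBlock : Commute paleyBlock flipBlock := by
  simp only [commute_iff_eq, paleyBlock, flipBlock, fromBlocks_multiply]
  congr 1 <;> noncomm_ring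

theorem paleyBlock_mul_paleyBlock :
    paleyBlock * paleyBlock =
      fromBlocks (2 • (1 + paleyCore * paleyCore)) (2 • (1 - paleyCore * paleyCore))
        (2 • (1 - paleyCore * paleyCore)) (2 • (1 + paleyCore * paleyCore)) := by
  rw [paleyBlock, fromBlocks_multiply]
  congr 1 <;> noncomm_ring

theorem flipBlock_mul_flipBlock :
    flipBlock * flipBlock =
      fromBlocks (2 • (diagonalFlip * diagonalFlip)) (2 • (diagonalFlip * diagonalFlip))
        (2 • (diagonalFlip * diagonalFlip)) (2 • (diagonalFlip * diagonalFlip)) := by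
  simp only [flipBlock, fromBlocks_multiply, two_nsmul]

theorem paleyBlock_sq_add_flipBlock_sq :
    paleyBlock * paleyBlock + flipBlock * flipBlock =
      fromBlocks (20 • 1) (4 • vecMulVec 1 1) (4 • vecMulVec 1 1) (20 • 1) := by
  rw [paleyBlock_mul_paleyBlock, flipBlock_mul_flipBlock, fromBlocks_add, paleyCore_mul_paleyCore,
    diagonalFlip_mul_diagonalFlip]
  congr 1 <;> module

theorem det_twenty_add_vecMulVec_two_one :
    (scalar (Fin 5 ⊕ Fin 5) (20 : ℤ) + vecMulVec 2 1).det = 2 * 20 ^ 10 := by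
  have htrace : (2 : Fin 5 ⊕ Fin 5 → ℤ) ⬝ᵥ 1 = 20 := by decide
  rw [det_scalar_add_vecMulVec, htrace]
  norm_num

theorem twenty_add_vecMulVec_two_one_mulVec_balancedSign :
    (scalar (Fin 5 ⊕ Fin 5) (20 : ℤ) + vecMulVec 2 1) *ᵥ balancedSign =
      (20 : ℤ) • balancedSign := by
  rw [add_mulVec, vecMulVec_mulVec, one_dotProduct_balancedSign, MulOpposite.op_zero, zero_smul,
    add_zero, scalar_apply, ← smul_one_eq_diagonal, smul_mulVec, one_mulVec]

/-- The symmetric sign matrix of order `11` in both diagonal positions of the record matrix. -/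
def diagonalBlock : Matrix (Unit ⊕ Fin 5 ⊕ Fin 5) (Unit ⊕ Fin 5 ⊕ Fin 5) ℤ :=
  bordered balancedSign paleyBlock

/-- The symmetric sign matrix of order `11` which occurs, up to sign, in both off-diagonal
positions of the record matrix. -/
def offDiagonalBlock : Matrix (Unit ⊕ Fin 5 ⊕ Fin 5) (Unit ⊕ Fin 5 ⊕ Fin 5) ℤ :=
  bordered balancedSign flipBlock

theorem commute_diagonalBlock_offDiagonalBlock : Commute diagonalBlock offDiagonalBlock :=
  commute_bordered commute_paleyBlock_flipBlock
    paleyBlock_mulVec_balancedSign balancedSign_vecMul_paleyBlock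
    flipBlock_mulVec_balancedSign balancedSign_vecMul_flipBlock

theorem diagonalBlock_sq_add_offDiagonalBlock_sq :
    diagonalBlock * diagonalBlock + offDiagonalBlock * offDiagonalBlock =
      fromBlocks (scalar Unit 22) (replicateRow Unit ((2 : ℤ) • balancedSign))
        (replicateCol Unit ((2 : ℤ) • balancedSign)) (scalar _ 20 + vecMulVec 2 1) := by
  have hinterior : vecMulVec balancedSign balancedSign + paleyBlock * paleyBlock +
      (vecMulVec balancedSign balancedSign + flipBlock * flipBlock) =
      scalar _ 20 + vecMulVec 2 1 := by
    rw [add_add_add_comm, paleyBlock_sq_add_flipBlock_sq]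
    decide +kernel
  rw [diagonalBlock, offDiagonalBlock, two_smul,
    bordered_mul_bordered paleyBlock_mulVec_balancedSign balancedSign_vecMul_paleyBlock,
    bordered_mul_bordered flipBlock_mulVec_balancedSign balancedSign_vecMul_flipBlock,
    fromBlocks_add, hinterior, balancedSign_dotProduct_self, ← map_add, ← replicateRow_add,
    ← replicateCol_add]
  norm_num

theorem det_diagonalBlock_sq_add_offDiagonalBlock_sq :
    (diagonalBlock * diagonalBlock + offDiagonalBlock * offDiagonalBlock).det =
      2 ^ 23 * 5 ^ 11 := by
  have heigen : (scalar (Fin 5 ⊕ Fin 5) 20 + vecMulVec 2 1) *ᵥ ((2 : ℤ) • balancedSign) =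
      (20 : ℤ) • ((2 : ℤ) • balancedSign) := by
    rw [mulVec_smul, twenty_add_vecMulVec_two_one_mulVec_balancedSign, smul_comm]
  have hdot : ((2 : ℤ) • balancedSign) ⬝ᵥ ((2 : ℤ) • balancedSign) = 40 := by
    rw [smul_dotProduct, dotProduct_smul, balancedSign_dotProduct_self]
    norm_num
  refine mul_left_cancel₀ (by norm_num : (20 : ℤ) ≠ 0) ?_
  calc 20 * (diagonalBlock * diagonalBlock + offDiagonalBlock * offDiagonalBlock).det
      = (20 * 22 - 40) * (scalar (Fin 5 ⊕ Fin 5) (20 : ℤ) + vecMulVec 2 1).det := by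
        rw [diagonalBlock_sq_add_offDiagonalBlock_sq,
          mul_det_fromBlocks_of_mulVec_eq_smul 22 _ heigen, hdot]
    _ = 20 * (2 ^ 23 * 5 ^ 11) := by
        rw [det_twenty_add_vecMulVec_two_one]
        norm_num

/-- The sign matrix `P F; -F P` of order `22` which realises the determinant `2 ^ 23 * 5 ^ 11`,
where `P` is `diagonalBlock` and `F` is `offDiagonalBlock`. -/
def recordMatrix : Matrix ((Unit ⊕ Fin 5 ⊕ Fin 5) ⊕ (Unit ⊕ Fin 5 ⊕ Fin 5))
    ((Unit ⊕ Fin 5 ⊕ Fin 5) ⊕ (Unit ⊕ Fin 5 ⊕ Fin 5)) ℤ :=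
  fromBlocks diagonalBlock offDiagonalBlock (-offDiagonalBlock) diagonalBlock

theorem isSignMatrix_recordMatrix : IsSignMatrix recordMatrix := by
  have hdiag : IsSignMatrix diagonalBlock :=
    isSignMatrix_paleyBlock.bordered balancedSign_eq_one_or_neg_one
  have hoff : IsSignMatrix offDiagonalBlock :=
    isSignMatrix_flipBlock.bordered balancedSign_eq_one_or_neg_one
  exact hdiag.fromBlocks hoff hoff.neg hdiag

theorem det_recordMatrix : recordMatrix.det = 2 ^ 23 * 5 ^ 11 := by
  rw [recordMatrix,
    det_fromBlocks_of_commute _ _ commute_diagonalBlock_offDiagonalBlock.symm.neg_left, mul_neg,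
    sub_neg_eq_add, det_diagonalBlock_sq_add_offDiagonalBlock_sq]

end OrderTwentyTwo

theorem stmt_0 :
    (∃ M : Matrix (Fin 22) (Fin 22) ℤ,
      (∀ i j, M i j = 1 ∨ M i j = -1) ∧ M.det = 2^23 * 5^11) ∧
    (2^23 * 5^11 : ℤ) ≤ md 22 := by
  let e : (Unit ⊕ Fin 5 ⊕ Fin 5) ⊕ (Unit ⊕ Fin 5 ⊕ Fin 5) ≃ Fin 22 :=
    Fintype.equivFinOfCardEq rfl
  have hsign : IsSignMatrix (recordMatrix.reindex e e) := isSignMatrix_recordMatrix.reindex e e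
  have hdet : (recordMatrix.reindex e e).det = 2 ^ 23 * 5 ^ 11 :=
    (Matrix.det_reindex_self e recordMatrix).trans det_recordMatrix
  exact ⟨⟨_, hsign, hdet⟩, hdet ▸ hsign.det_le_md⟩
end

section
/- There exists a 27×27 matrix with all entries equal to 1 or -1 whose determinant equals 2^26 · 6^11 · 518. Consequently md(27) ≥ 2^26 · 6^11 · 518. -/
/-!
The Gram matrix determines the determinant up to sign, and negating a matrix of odd order changes
that sign; so it suffices to find a sign matrix `A` with
`det (A * Aᵀ) = (2 ^ 26 * 6 ^ 11 * 518) ^ 2`. The matrix below is a `7 × 7` array of `3 × 3`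
back-circulants, bordered by parts of the core of a Hadamard matrix of order `8`. Apart from three
rows, its Gram matrix is that of a group divisible design with four groups of six rows: `27` on the
diagonal, `3` within a group and `-1` between groups. Eliminating the three exceptional rows leaves
a Schur complement of the form `α I + β J`.
-/

open Matrix

section Determinants

variable {m n R : Type*} [Fintype m] [Fintype n] [DecidableEq m] [DecidableEq n] [CommRing R]

theorem det_smul_one_add_mul_comm_of_le (a : R) (A : Matrix m n R) (B : Matrix n m R)
    (h : Fintype.card n ≤ Fintype.card m) :
    (a • 1 + A * B).det = a ^ (Fintype.card m - Fintype.card n) * (a • 1 + B * A).det := by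
  simpa [eval_charpoly, scalar_apply, ← smul_one_eq_diagonal] using
    congr(($(charpoly_mul_comm_of_le (-A) B h)).eval a)

theorem det_smul_one_add_const [Nonempty n] (a b : R) :
    (a • 1 + of fun _ _ : n => b).det
      = a ^ (Fintype.card n - 1) * (a + Fintype.card n * b) := by
  have factorization : (of fun _ _ : n => b) = (of fun _ _ => b : Matrix n Unit R) *
      (of fun _ _ => 1 : Matrix Unit n R) := by
    ext; simp [mul_apply]
  rw [factorization, det_smul_one_add_mul_comm_of_le _ _ _
    (Fintype.card_unit.trans_le Fintype.card_pos)]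
  simp [mul_apply]

theorem det_smul_one_add_submatrix_fst [Nonempty n] (a : R) (B : Matrix m m R) :
    (a • 1 + B.submatrix Prod.fst Prod.fst : Matrix (m × n) (m × n) R).det
      = a ^ (Fintype.card m * Fintype.card n - Fintype.card m)
        * (a • 1 + (Fintype.card n : R) • B).det := by
  set P : Matrix (m × n) m R := (1 : Matrix m m R).submatrix Prod.fst id
  set Q : Matrix m (m × n) R := B.submatrix id Prod.fst
  have factorization : B.submatrix Prod.fst Prod.fst = P * Q := by
    ext; simp [P, Q, mul_apply, one_apply]
  have fiber_sum : Q * P = (Fintype.card n : R) • B := by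
    ext; simp [P, Q, mul_apply, one_apply, Fintype.sum_prod_type_right]
  rw [factorization, det_smul_one_add_mul_comm_of_le, fiber_sum, Fintype.card_prod]
  rw [Fintype.card_prod]
  exact Nat.le_mul_of_pos_right _ Fintype.card_pos

/-- The Schur complement formula with denominators cleared: `W` is `k` times `D⁻¹ * C`. -/
theorem pow_card_mul_det_fromBlocks_of_mul_eq_smul {A : Matrix m m R} {B : Matrix m n R}
    {C W : Matrix n m R} {D : Matrix n n R} {k : R} (h : D * W = k • C) :
    k ^ Fintype.card m * (fromBlocks A B C D).det = (k • A - B * W).det * D.det := by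
  have elimination : fromBlocks A B C D * fromBlocks (k • 1) 0 (-W) 1
      = fromBlocks (k • A - B * W) B 0 D := by
    simp [fromBlocks_multiply, h, sub_eq_add_neg]
  have := congr(($elimination).det)
  rw [det_mul, det_fromBlocks_zero₁₂, det_fromBlocks_zero₂₁] at this
  simpa [mul_comm] using this

end Determinants

section SignMatrices

theorem det_le_md {n : ℕ} {M : Matrix (Fin n) (Fin n) ℤ} (hM : ∀ i j, M i j = 1 ∨ M i j = -1) :
    M.det ≤ md n := by
  refine le_csSup ⟨n.factorial • 1 ^ n, ?_⟩ ⟨M, hM, rfl⟩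
  rintro _ ⟨N, hN, rfl⟩
  have entry_le (i j) : AbsoluteValue.abs (N i j) ≤ 1 := by rcases hN i j with h | h <;> simp [h]
  simpa using (le_abs_self _).trans (det_le entry_le)

theorem exists_sign_matrix_det_eq_of_det_gram_eq_sq {ι κ : Type*} [Fintype ι] [Fintype κ]
    [DecidableEq ι] {n : ℕ} (hι : Fintype.card ι = n) (hκ : Fintype.card κ = n) (hn : Odd n)
    {A : Matrix ι κ ℤ} (hA : ∀ i j, A i j = 1 ∨ A i j = -1) {d : ℤ}
    (hd : (A * Aᵀ).det = d ^ 2) :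
    ∃ M : Matrix (Fin n) (Fin n) ℤ, (∀ i j, M i j = 1 ∨ M i j = -1) ∧ M.det = d := by
  let e := Fintype.equivFinOfCardEq hι
  let f := Fintype.equivFinOfCardEq hκ
  let M := A.submatrix e.symm f.symm
  have hM (i j) : M i j = 1 ∨ M i j = -1 := hA _ _
  have gram : M * Mᵀ = (A * Aᵀ).submatrix e.symm e.symm := by
    rw [transpose_submatrix, submatrix_mul_equiv]
  have sq_det : M.det ^ 2 = d ^ 2 := by
    rw [← hd, ← det_submatrix_equiv_self e.symm, ← gram, det_mul, det_transpose, sq]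
  rcases sq_eq_sq_iff_eq_or_eq_neg.mp sq_det with h | h
  · exact ⟨M, hM, h⟩
  · refine ⟨-M, fun i j => ?_, ?_⟩
    · rcases hM i j with h | h <;> simp [h]
    · simp [det_neg, hn.neg_one_pow, h]

end SignMatrices

/-- The core of a symmetric Hadamard matrix of order `8`, with row sums `1`; the positions of `-1`
in its rows are the lines of the Fano plane. -/
def hadamardCore : Matrix (Fin 7) (Fin 7) ℤ :=
  !![-1, -1, -1,  1,  1,  1,  1;
     -1,  1,  1, -1, -1,  1,  1;
     -1,  1,  1,  1,  1, -1, -1;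
      1, -1,  1, -1,  1, -1,  1;
      1, -1,  1,  1, -1,  1, -1;
      1,  1, -1, -1,  1,  1, -1;
      1,  1, -1,  1, -1, -1,  1]

/-- The offsets of the back-circulant blocks of `borderedCirculant`: row `a` of the block `(s, t)`
differs from a constant row exactly in column `blockOffset s t - a`. -/
def blockOffset : Matrix (Fin 7) (Fin 7) (Fin 3) :=
  !![0, 1, 1, 1, 1, 1, 1;
     1, 0, 0, 1, 1, 2, 2;
     1, 0, 0, 2, 2, 1, 1;
     1, 1, 2, 1, 2, 1, 2;
     1, 1, 2, 2, 1, 2, 1;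
     1, 2, 1, 1, 2, 2, 1;
     1, 2, 1, 2, 1, 1, 2]

/-- The sign matrix whose determinant is computed, up to sign: a symmetric `7 × 7` array of
`3 × 3` back-circulant blocks, bordered by six rows and columns which are constant on the blocks
and are taken from `hadamardCore`. -/
def borderedCirculant : Matrix (Fin 7 × Fin 3 ⊕ Fin 6) (Fin 7 × Fin 3 ⊕ Fin 6) ℤ
  | .inl (s, a), .inl (t, b) => if a + b = blockOffset s t ↔ s < 3 ∧ t < 3 then -1 else 1
  | .inl (s, _), .inr j => hadamardCore s j.succ
  | .inr i, .inl (t, _) => hadamardCore i.succ t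
  | .inr _, .inr _ => -1

/-- The rows of `borderedCirculant`, listed as three exceptional rows followed by four groups of
six rows. The group `none` consists of the border rows. -/
def groupedRow : Fin 3 ⊕ Option (Fin 3) × Fin 6 → Fin 7 × Fin 3 ⊕ Fin 6
  | .inl a => .inl (0, a)
  | .inr (some a, i) => .inl (i.succ, a)
  | .inr (none, i) => .inr i

/-- The group whose `i`-th row has inner product `3` with the exceptional row `a`. If it were `a`
for every `i`, the exceptional rows could be adjoined to the groups. -/
def attachedGroup (a : Fin 3) (i : Fin 6) : Option (Fin 3) :=
  some (if i < 2 then a + 1 else a)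

/-- The inner products of the exceptional rows with the grouped rows. -/
def exceptionalGram : Matrix (Fin 3) (Option (Fin 3) × Fin 6) ℤ :=
  of fun a (c, i) => if c = attachedGroup a i then 3 else -1

/-- The `4 × 4` matrix of inner products between distinct rows of two groups. -/
def groupInner : Matrix (Option (Fin 3)) (Option (Fin 3)) ℤ :=
  (4 : ℤ) • 1 + of fun _ _ => -1

/-- The Gram matrix of the grouped rows. -/
def groupGram : Matrix (Option (Fin 3) × Fin 6) (Option (Fin 3) × Fin 6) ℤ :=
  (24 : ℤ) • 1 + groupInner.submatrix Prod.fst Prod.fst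

/-- The matrix `144 • groupGram⁻¹ * exceptionalGramᵀ`, which eliminates the exceptional rows. -/
def groupElimination : Matrix (Option (Fin 3) × Fin 6) (Fin 3) ℤ :=
  of fun (c, i) a => (if c = attachedGroup a i then 24 else 0)
    - (if c = some a then 8 else 0) - (if c = some (a + 1) then 4 else 0) - 3

theorem borderedCirculant_eq_one_or_neg_one (x y) :
    borderedCirculant x y = 1 ∨ borderedCirculant x y = -1 := by
  have core_entry (s t : Fin 7) : hadamardCore s t = 1 ∨ hadamardCore s t = -1 := by
    fin_cases s <;> fin_cases t <;> decide
  rcases x with ⟨s, a⟩ | i <;> rcases y with ⟨t, b⟩ | j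
  · exact (ite_eq_or_eq _ _ _).symm
  · exact core_entry _ _
  · exact core_entry _ _
  · exact Or.inr rfl

theorem gram_borderedCirculant :
    borderedCirculant.submatrix groupedRow id * (borderedCirculant.submatrix groupedRow id)ᵀ
      = fromBlocks ((28 : ℤ) • 1 + of fun _ _ => -1) exceptionalGram exceptionalGramᵀ
          groupGram := by
  decide +kernel

theorem det_groupGram : groupGram.det = 24 ^ 21 * 48 ^ 3 := by
  have quotient : (24 : ℤ) • 1 + (6 : ℤ) • groupInner = (48 : ℤ) • 1 + of fun _ _ => -6 := by
    decide
  calc groupGram.det = 24 ^ 20 * ((24 : ℤ) • 1 + (6 : ℤ) • groupInner).det :=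
        det_smul_one_add_submatrix_fst 24 groupInner
    _ = 24 ^ 20 * (48 ^ 3 * (48 + 4 * -6)) := by
        rw [quotient, det_smul_one_add_const]; rfl
    _ = 24 ^ 21 * 48 ^ 3 := by norm_num

theorem groupGram_mul_groupElimination :
    groupGram * groupElimination = (144 : ℤ) • exceptionalGramᵀ := by
  decide +kernel

theorem schurComplement_groupGram :
    (144 : ℤ) • ((28 : ℤ) • 1 + of fun _ _ => -1) - exceptionalGram * groupElimination
      = (3552 : ℤ) • 1 + of fun _ _ => -8 := by
  decide +kernel

theorem det_gram_borderedCirculant :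
    (borderedCirculant.submatrix groupedRow id
      * (borderedCirculant.submatrix groupedRow id)ᵀ).det = (2 ^ 26 * 6 ^ 11 * 518) ^ 2 := by
  have schur := pow_card_mul_det_fromBlocks_of_mul_eq_smul
    (A := (28 : ℤ) • 1 + of fun _ _ => -1) (B := exceptionalGram) groupGram_mul_groupElimination
  rw [schurComplement_groupGram, det_smul_one_add_const, det_groupGram,
    ← gram_borderedCirculant, Fintype.card_fin] at schur
  exact mul_left_cancel₀ (by norm_num : (144 : ℤ) ^ 3 ≠ 0) (schur.trans (by norm_num))

theorem stmt_2 :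
    (∃ M : Matrix (Fin 27) (Fin 27) ℤ,
      (∀ i j, M i j = 1 ∨ M i j = -1) ∧ M.det = 2^26 * 6^11 * 518) ∧
    (2^26 * 6^11 * 518 : ℤ) ≤ md 27 := by
  obtain ⟨M, hM, hdet⟩ := exists_sign_matrix_det_eq_of_det_gram_eq_sq
    (A := borderedCirculant.submatrix groupedRow id) (n := 27) (by simp) (by simp) (by decide)
    (fun _ _ => borderedCirculant_eq_one_or_neg_one _ _) det_gram_borderedCirculant
  exact ⟨⟨M, hM, hdet⟩, hdet ▸ det_le_md hM⟩
end

section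
/- There exists a 69×69 matrix with all entries equal to 1 or -1 whose determinant equals 2^68 · 17^33 · 155. Consequently md(69) ≥ 2^68 · 17^33 · 155. -/
/-!
Let `H` be a Hadamard matrix of order `n` three of whose rows have columnwise product `1`. Append a
column that is `0` on these rows and `1` on the others, and then a row of ones ending in `-2`. As
`H⁻¹ = Hᴴ / n`, the determinant of the bordered matrix is an explicit affine function of the sum of
the entries of `H` outside the three rows. An integral matrix of determinant `-16` turns the three
rows and the new row into rows with entries `± 2`; halving these gives a sign matrix of order
`n + 1` with the same absolute determinant. Negating rows and columns of `H` makes the sum large,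
and for a suitable Williamson matrix of order `68` it becomes `484`.
-/

open Matrix

namespace MaxDet

section Hadamard

variable {R k m n : Type*} [Fintype k] [Fintype m] [Fintype n]
  [DecidableEq k] [DecidableEq m] [DecidableEq n]

theorem det_le_md {n : ℕ} {M : Matrix (Fin n) (Fin n) ℤ} (hM : ∀ i j, M i j = 1 ∨ M i j = -1) :
    M.det ≤ md n := by
  refine le_csSup ⟨n.factorial, ?_⟩ ⟨M, hM, rfl⟩
  rintro _ ⟨N, hN, rfl⟩
  have abs_le_one (i j) : AbsoluteValue.abs (N i j) ≤ 1 := by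
    rcases hN i j with h | h <;> simp [h]
  simpa using (le_abs_self _).trans (det_le abs_le_one)

theorem exists_det_eq_abs_det [Nonempty n] {M : Matrix n n ℤ}
    (hM : ∀ i j, M i j = 1 ∨ M i j = -1) :
    ∃ N : Matrix n n ℤ, (∀ i j, N i j = 1 ∨ N i j = -1) ∧ N.det = |M.det| := by
  rcases abs_choice M.det with h | h
  · exact ⟨M, hM, h.symm⟩
  · let i₀ : n := Classical.arbitrary n
    refine ⟨M.updateRow i₀ (-M i₀), fun i j ↦ ?_, ?_⟩
    · by_cases hi : i = i₀
      · subst hi; simpa [neg_eq_iff_eq_neg, or_comm] using hM _ j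
      · simpa [hi] using hM i j
    · rw [h, ← neg_one_smul ℤ (M i₀), det_updateRow_smul, updateRow_eq_self, neg_one_mul]

section CommRing

variable [CommRing R]

theorem det_fromRows_mul (A : Matrix m (m ⊕ k) R) (Q : Matrix k k R) (B : Matrix k (m ⊕ k) R) :
    (fromRows A (Q * B)).det = Q.det * (fromRows A B).det := by
  have factor : fromRows A (Q * B) = fromBlocks 1 0 0 Q * fromRows A B := by
    simp [fromBlocks_mul_fromRows]
  rw [factor, det_mul, det_fromBlocks_zero₁₂, det_one, one_mul]

theorem card_mul_det_bordered [StarRing R] {H : Matrix n n R} (hH : H.IsHadamard)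
    (u : Matrix n Unit R) (v : Matrix Unit n R) (d : Matrix Unit Unit R) :
    Fintype.card n * (fromBlocks H u v d).det =
      H.det * (Fintype.card n * d () () - (v * Hᴴ * u) () ()) := by
  have triangular : fromBlocks H u v d * fromBlocks 1 (-(Hᴴ * u)) 0 ((Fintype.card n : R) • 1) =
      fromBlocks H 0 v ((Fintype.card n : R) • d - v * Hᴴ * u) := by
    simp [fromBlocks_multiply, ← Matrix.mul_assoc, hH.mul_conjTranspose, neg_add_eq_sub]
  simpa [det_fromBlocks_zero₁₂, mul_comm] using congrArg det triangular

end CommRing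

theorem abs_det_eq_abs_det_of_isHadamard {H K : Matrix n n ℤ} (hH : H.IsHadamard)
    (hK : K.IsHadamard) : |H.det| = |K.det| := by
  rw [← sq_eq_sq_iff_abs_eq_abs]
  simpa [sq] using hH.det_mul_star_det.trans hK.det_mul_star_det.symm

theorem abs_det_of_card_eq_two_mul {H : Matrix n n ℤ} (hH : H.IsHadamard) {t : ℕ}
    (ht : Fintype.card n = 2 * t) : |H.det| = (2 * t) ^ t := by
  have sq_det : |H.det| ^ 2 = ((2 * t) ^ t) ^ 2 := by
    have := hH.det_mul_star_det
    rw [ht] at this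
    simpa [sq, ← pow_mul, mul_comm t, two_mul, pow_add] using this
  exact (sq_eq_sq₀ (abs_nonneg _) (by positivity)).1 sq_det

theorem isHadamard_diagonal_mul_mul_diagonal [CommRing R] [StarRing R] {H : Matrix n n R}
    (hH : H.IsHadamard) {r c : n → R} (hr : ∀ i, r i ∈ unitary R) (hc : ∀ i, c i ∈ unitary R) :
    (diagonal r * H * diagonal c).IsHadamard := by
  have diagonal_mem {d : n → R} (hd : ∀ i, d i ∈ unitary R) :
      diagonal d ∈ unitary (Matrix n n R) := by
    simp [Unitary.mem_iff, star_eq_conjTranspose, diagonal_conjTranspose, diagonal_mul_diagonal,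
      fun i ↦ Unitary.star_mul_self_of_mem (hd i), fun i ↦ Unitary.mul_star_self_of_mem (hd i)]
  obtain ⟨r_left, r_right⟩ := Unitary.mem_iff.1 (diagonal_mem hr)
  obtain ⟨c_left, c_right⟩ := Unitary.mem_iff.1 (diagonal_mem hc)
  rw [star_eq_conjTranspose] at r_left r_right c_left c_right
  refine ⟨fun i j ↦ ?_, ?_, ?_⟩
  · simpa [diagonal_mul, mul_diagonal] using mul_mem (mul_mem (hr i) (hH.apply_mem i j)) (hc j)
  · calc
      _ = diagonal r * (H * (diagonal c * (diagonal c)ᴴ) * Hᴴ) * (diagonal r)ᴴ := by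
        simp only [conjTranspose_mul, Matrix.mul_assoc]
      _ = _ := by
        rw [c_right, Matrix.mul_one, hH.mul_conjTranspose, Matrix.mul_smul, Matrix.mul_one,
          Matrix.smul_mul, r_right]
  · calc
      _ = (diagonal c)ᴴ * (Hᴴ * ((diagonal r)ᴴ * diagonal r) * H) * diagonal c := by
        simp only [conjTranspose_mul, Matrix.mul_assoc]
      _ = _ := by
        rw [r_left, Matrix.mul_one, hH.conjTranspose_mul, Matrix.mul_smul, Matrix.mul_one,
          Matrix.smul_mul, c_left]

theorem exists_abs_det_eq_of_mul_eq_two {Q : Matrix k k ℤ} (hQ : |Q.det| = 2 ^ Fintype.card k)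
    {X : Matrix (m ⊕ k) (m ⊕ k) ℤ} (hX : ∀ i j, X (.inl i) j = 1 ∨ X (.inl i) j = -1)
    (hQX : ∀ i j, (Q * X.toRows₂) i j = 2 ∨ (Q * X.toRows₂) i j = -2) :
    ∃ M : Matrix (m ⊕ k) (m ⊕ k) ℤ, (∀ i j, M i j = 1 ∨ M i j = -1) ∧ |M.det| = |X.det| := by
  let Y := (Q * X.toRows₂).map (· / 2)
  have two_mul_Y : diagonal (fun _ : k ↦ (2 : ℤ)) * Y = Q * X.toRows₂ := by
    ext i j
    rcases hQX i j with h | h <;> simp [Y, h]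
  refine ⟨fromRows X.toRows₁ Y, ?_, ?_⟩
  · rintro (i | i) j
    · exact hX i j
    · rcases hQX i j with h | h <;> simp [Y, h]
  · have det_eq := congrArg abs (det_fromRows_mul X.toRows₁ (diagonal fun _ ↦ 2) Y)
    rw [two_mul_Y, det_fromRows_mul, fromRows_toRows, det_diagonal, abs_mul, hQ] at det_eq
    simpa [abs_mul] using det_eq.symm

/-- A matrix that multiplies four rows `a`, `b`, `c`, `1` with entries `± 1` and `a * b * c = 1`
into rows with entries `± 2`. -/
def tripleMix : Matrix (Fin 3 ⊕ Unit) (Fin 3 ⊕ Unit) ℤ :=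
  fromBlocks !![1, -1, -1; -1, 1, -1; -1, -1, 1] (-of 1) (-of 1) 1

theorem det_tripleMix : tripleMix.det = -16 := by
  rw [tripleMix, det_fromBlocks_one₂₂, det_fin_three]
  decide

/-- The matrix obtained from `H` by appending a column that is `1` on the rows in `m` and `0` on the
rows in `k`, and then a row of ones whose last entry is `-2`. It is indexed so that the rows in `k`
and the new row form one block. -/
def border (H : Matrix (m ⊕ k) (m ⊕ k) ℤ) :
    Matrix (m ⊕ k ⊕ Unit) (m ⊕ k ⊕ Unit) ℤ :=
  (fromBlocks H (fromRows (of 1) 0) (of 1) (of fun _ _ ↦ -2)).submatrix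
    (Equiv.sumAssoc m k Unit).symm (Equiv.sumAssoc m k Unit).symm

theorem card_mul_det_border {H : Matrix (m ⊕ k) (m ⊕ k) ℤ} (hH : H.IsHadamard) :
    Fintype.card (m ⊕ k) * (border H).det =
      -(H.det * (2 * Fintype.card (m ⊕ k) + ∑ i, ∑ j, H (.inl i) j)) := by
  have sum_eq : ((of 1 : Matrix Unit (m ⊕ k) ℤ) * Hᴴ *
      (fromRows (of 1) 0 : Matrix (m ⊕ k) Unit ℤ)) () () = ∑ i, ∑ j, H (.inl i) j := by
    simp [mul_apply]
  rw [border, det_submatrix_equiv_self, card_mul_det_bordered hH, sum_eq]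
  simp only [of_apply]
  ring

theorem tripleMix_mul_border_apply {m : Type*} {H : Matrix (m ⊕ Fin 3) (m ⊕ Fin 3) ℤ}
    (hH : ∀ i j, H i j = 1 ∨ H i j = -1) (hprod : ∀ j, ∏ t, H (.inr t) j = 1) (i j) :
    (tripleMix * (border H).toRows₂) i j = 2 ∨ (tripleMix * (border H).toRows₂) i j = -2 := by
  obtain ⟨j, rfl⟩ := (Equiv.sumAssoc m (Fin 3) Unit).surjective j
  rcases j with j | j
  · have prod_eq_one := hprod j
    rw [Fin.prod_univ_three] at prod_eq_one
    rcases hH (.inr 0) j with h₀ | h₀ <;> rcases hH (.inr 1) j with h₁ | h₁ <;>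
      rcases hH (.inr 2) j with h₂ | h₂ <;> simp [h₀, h₁, h₂] at prod_eq_one <;>
      rcases i with i | i <;> fin_cases i <;>
      simp [tripleMix, border, mul_apply, Fin.sum_univ_three, one_apply, h₀, h₁, h₂]
  · rcases i with i | i <;> simp [tripleMix, border, mul_apply]

theorem exists_abs_det_of_prod_eq_one {H : Matrix (m ⊕ Fin 3) (m ⊕ Fin 3) ℤ} (hH : H.IsHadamard)
    (hprod : ∀ j, ∏ t, H (.inr t) j = 1) :
    ∃ M : Matrix (m ⊕ Fin 3 ⊕ Unit) (m ⊕ Fin 3 ⊕ Unit) ℤ, (∀ i j, M i j = 1 ∨ M i j = -1) ∧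
      Fintype.card (m ⊕ Fin 3) * |M.det| =
        |H.det| * |2 * Fintype.card (m ⊕ Fin 3) + ∑ i, ∑ j, H (.inl i) j| := by
  have hsign (i j) : H i j = 1 ∨ H i j = -1 :=
    Unitary.mem_iff_eq_one_or_eq_neg_one.1 (hH.apply_mem i j)
  obtain ⟨M, hM, hdet⟩ := exists_abs_det_eq_of_mul_eq_two (by simp [det_tripleMix])
    (X := border H) (by rintro i (j | j | j) <;> simp [border, hsign])
    (tripleMix_mul_border_apply hsign hprod)
  refine ⟨M, hM, ?_⟩
  rw [hdet, ← abs_mul, ← abs_neg (H.det * _), ← card_mul_det_border hH, abs_mul, Nat.abs_cast]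

theorem exists_isHadamard_prod_eq_one (hk : Odd (Fintype.card k))
    {H : Matrix (m ⊕ k) (m ⊕ k) ℤ} (hH : H.IsHadamard) :
    ∃ K : Matrix (m ⊕ k) (m ⊕ k) ℤ, K.IsHadamard ∧ (∀ j, ∏ t, K (.inr t) j = 1) ∧
      ∀ i, ∑ j, K (.inl i) j = |∑ j, H (.inl i) j * ∏ t, H (.inr t) j| := by
  let c (j) := ∏ t, H (.inr t) j
  let r : m ⊕ k → ℤ := Sum.elim (fun i ↦ if 0 ≤ ∑ j, H (.inl i) j * c j then 1 else -1) 1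
  have hc (j) : c j ∈ unitary ℤ := prod_mem fun t _ ↦ hH.apply_mem (.inr t) j
  have hr (i) : r i ∈ unitary ℤ := by
    rw [Unitary.mem_iff_eq_one_or_eq_neg_one]
    rcases i with i | i
    · simp only [r, Sum.elim_inl]
      split_ifs <;> simp
    · simp [r]
  have c_sq (j) : c j * c j = 1 := Unitary.star_mul_self_of_mem (hc j)
  refine ⟨_, isHadamard_diagonal_mul_mul_diagonal hH hr hc, fun j ↦ ?_, fun i ↦ ?_⟩
  · obtain ⟨p, hp⟩ := hk.add_one
    calc
      _ = c j ^ (Fintype.card k + 1) := by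
        simp [r, c, mul_diagonal, diagonal_mul, Finset.prod_mul_distrib, pow_succ']
      _ = 1 := by rw [hp, pow_add, ← mul_pow, c_sq, one_pow]
  · simp only [mul_diagonal, diagonal_mul, mul_assoc, ← Finset.mul_sum, r, Sum.elim_inl, c]
    split_ifs with h
    · rw [one_mul, abs_of_nonneg h]
    · rw [neg_one_mul, abs_of_neg (not_le.1 h)]

theorem exists_abs_det_eq_sum_abs {H : Matrix (m ⊕ Fin 3) (m ⊕ Fin 3) ℤ} (hH : H.IsHadamard) :
    ∃ M : Matrix (m ⊕ Fin 3 ⊕ Unit) (m ⊕ Fin 3 ⊕ Unit) ℤ, (∀ i j, M i j = 1 ∨ M i j = -1) ∧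
      Fintype.card (m ⊕ Fin 3) * |M.det| = |H.det| *
        (2 * Fintype.card (m ⊕ Fin 3) + ∑ i, |∑ j, H (.inl i) j * ∏ t, H (.inr t) j|) := by
  obtain ⟨K, hK, hprod, hsum⟩ := exists_isHadamard_prod_eq_one (by decide) hH
  obtain ⟨M, hM, hdet⟩ := exists_abs_det_of_prod_eq_one hK hprod
  refine ⟨M, hM, ?_⟩
  rw [hdet, abs_det_eq_abs_det_of_isHadamard hK hH]
  simp only [hsum]
  rw [abs_of_nonneg (a := _ + _) (by positivity)]

/-- For `H` with entries `± 1`, the sum of the entries outside the rows `f t`, after columns have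
been negated so that the product of the rows `f t` is `1`, and then the other rows so that each has
a nonnegative sum. -/
def normalizedExcess (H : Matrix n n ℤ) (f : k → n) : ℤ :=
  ∑ i : {i // i ∉ Set.range f}, |∑ j, H i j * ∏ t, H (f t) j|

theorem exists_abs_det_eq_of_injective {H : Matrix n n ℤ} (hH : H.IsHadamard)
    {f : Fin 3 → n} (hf : f.Injective) :
    ∃ M : Matrix (n ⊕ Unit) (n ⊕ Unit) ℤ, (∀ i j, M i j = 1 ∨ M i j = -1) ∧
      Fintype.card n * |M.det| = |H.det| *
        (2 * Fintype.card n + normalizedExcess H f) := by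
  let e : {i // i ∉ Set.range f} ⊕ Fin 3 ≃ n :=
    (Equiv.sumCongr (Equiv.refl _) (Equiv.ofInjective f hf)).trans <|
      (Equiv.sumComm _ _).trans (Equiv.sumCompl (· ∈ Set.range f))
  let eBordered := (Equiv.sumAssoc _ _ _).symm.trans (e.sumCongr (Equiv.refl Unit))
  have he_inl (i) : e (.inl i) = i := rfl
  have he_inr (t) : e (.inr t) = f t := rfl
  obtain ⟨M, hM, hdet⟩ := exists_abs_det_eq_sum_abs (hH.reindex e.symm e.symm)
  refine ⟨M.submatrix eBordered.symm eBordered.symm, fun _ _ ↦ hM _ _, ?_⟩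
  have sum_comp (i) := e.sum_comp fun j ↦ H i j * ∏ t, H (f t) j
  simpa only [det_submatrix_equiv_self, det_reindex_self, Fintype.card_congr e, reindex_apply,
    submatrix_apply, Equiv.symm_symm, he_inl, he_inr, sum_comp, normalizedExcess] using hdet

theorem exists_det_eq_of_isHadamard {t : ℕ} (ht : Fintype.card n = 2 * t) {H : Matrix n n ℤ}
    (hH : H.IsHadamard) {f : Fin 3 → n} (hf : f.Injective) :
    ∃ M : Matrix (Fin (2 * t + 1)) (Fin (2 * t + 1)) ℤ, (∀ i j, M i j = 1 ∨ M i j = -1) ∧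
      2 * t * M.det = (2 * t) ^ t * (4 * t + normalizedExcess H f) := by
  obtain ⟨M, hM, hdet⟩ := exists_abs_det_eq_of_injective hH hf
  obtain ⟨N, hN, hdet'⟩ := exists_det_eq_abs_det hM
  let e : n ⊕ Unit ≃ Fin (2 * t + 1) := Fintype.equivFinOfCardEq (by simp [ht])
  refine ⟨reindex e e N, fun _ _ ↦ hN _ _, ?_⟩
  rw [abs_det_of_card_eq_two_mul hH ht, ht] at hdet
  rw [det_reindex_self, hdet']
  push_cast at hdet
  rw [hdet]
  ring

end Hadamard

section Williamson

variable {R S n : Type*}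

/-- For real `a`, the matrix of right multiplication by the conjugate of the quaternion
`a 0 + a 1 i + a 2 j + a 3 k` with respect to the basis `1, i, j, k`. -/
def quaternionArray [Neg S] (a : Fin 4 → S) : Matrix (Fin 4) (Fin 4) S :=
  !![a 0, a 1, a 2, a 3; -a 1, a 0, -a 3, a 2; -a 2, a 3, a 0, -a 1; -a 3, -a 2, a 1, a 0]

theorem quaternionArray_apply_induction [Neg S] {a : Fin 4 → S} {P : S → Prop}
    (hpos : ∀ t, P (a t)) (hneg : ∀ t, P (-a t)) (i j : Fin 4) : P (quaternionArray a i j) := by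
  fin_cases i <;> fin_cases j <;> first | exact hpos _ | exact hneg _

theorem quaternionArray_mul_conjTranspose [Ring S] [StarRing S] {a : Fin 4 → S}
    (ha : ∀ i, IsSelfAdjoint (a i)) (hcomm : ∀ i j, Commute (a i) (a j)) :
    quaternionArray a * (quaternionArray a)ᴴ = diagonal fun _ ↦ ∑ i, a i * a i := by
  ext1 i j
  simp only [mul_apply, Fin.sum_univ_four, conjTranspose_apply]
  fin_cases i <;> fin_cases j <;>
    simp [quaternionArray, (ha _).star_eq, (hcomm 1 0).eq, (hcomm 2 0).eq, (hcomm 3 0).eq,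
      (hcomm 2 1).eq, (hcomm 3 1).eq, (hcomm 3 2).eq] <;> abel

/-- Williamson's array of four square blocks. -/
def williamson [Neg R] (A : Fin 4 → Matrix n n R) : Matrix (Fin 4 × n) (Fin 4 × n) R :=
  comp _ _ _ _ _ (quaternionArray A)

variable [CommRing R] [StarRing R] [Fintype n] [DecidableEq n]

theorem isHadamard_williamson {A : Fin 4 → Matrix n n R} (hunit : ∀ t i j, A t i j ∈ unitary R)
    (hA : ∀ t, (A t).IsHermitian) (hcomm : ∀ t u, Commute (A t) (A u))
    (hsum : ∑ t, A t * A t = (4 * Fintype.card n : R) • 1)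
    (hcard : IsRegular (4 * Fintype.card n : R)) :
    (williamson A).IsHadamard := by
  have card_eq : (Fintype.card (Fin 4 × n) : R) = 4 * Fintype.card n := by simp
  refine .of_mul_conjTranspose (fun i j ↦ ?_) ?_ (card_eq ▸ hcard)
  · exact quaternionArray_apply_induction (P := fun M : Matrix n n R ↦ M i.2 j.2 ∈ unitary R)
      (hunit · i.2 j.2) (fun t ↦ by simpa [Unitary.mem_iff] using hunit t i.2 j.2) i.1 j.1
  · have conjTranspose_eq : (williamson A)ᴴ = comp _ _ _ _ _ (quaternionArray A)ᴴ := rfl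
    rw [conjTranspose_eq, williamson, ← compRingEquiv_apply, ← compRingEquiv_apply, ← map_mul,
      quaternionArray_mul_conjTranspose hA hcomm, hsum, card_eq, compRingEquiv_apply]
    ext ⟨i, a⟩ ⟨j, b⟩
    by_cases h : i = j <;> simp [h, one_apply]

theorem isHadamard_williamson_circulant [AddCommGroup n] {v : Fin 4 → n → R}
    (hunit : ∀ t i, v t i ∈ unitary R) (hv : ∀ t i, star (v t (-i)) = v t i)
    (hsum : ∑ t, circulant (v t) *ᵥ v t = Pi.single 0 (4 * (Fintype.card n : R)))
    (hcard : IsRegular (4 * Fintype.card n : R)) :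
    (williamson fun t ↦ circulant (v t)).IsHadamard := by
  refine isHadamard_williamson (fun t i j ↦ hunit t (i - j)) (fun t ↦ ?_)
    (fun _ _ ↦ circulant_mul_comm _ _) ?_ hcard
  · rw [IsHermitian, conjTranspose_circulant]
    exact congrArg circulant (funext (hv t))
  · calc
      _ = circulant (∑ t, circulant (v t) *ᵥ v t) := by
        ext i j
        simp [circulant_mul, Matrix.sum_apply]
      _ = _ := by rw [hsum, circulant_single, scalar_apply, smul_one_eq_diagonal]

end Williamson

section Order68

variable {n : Type*}

/-- The symmetric sequence with value `-1` at `± s` for `s ∈ S` and `1` elsewhere. -/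
def symmSign [Neg n] [DecidableEq n] (S : Finset n) (x : n) : ℤ :=
  if x ∈ S ∨ -x ∈ S then -1 else 1

theorem symmSign_mem_unitary [Neg n] [DecidableEq n] (S : Finset n) (x : n) :
    symmSign S x ∈ unitary ℤ := by
  rw [Unitary.mem_iff_eq_one_or_eq_neg_one, symmSign]
  split_ifs <;> simp

theorem symmSign_neg [InvolutiveNeg n] [DecidableEq n] (S : Finset n) (x : n) :
    symmSign S (-x) = symmSign S x := by
  simp only [symmSign, neg_neg, or_comm]

/-- First rows of four symmetric circulants whose squares sum to `68`, found by computer search. -/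
def williamsonSeq : Fin 4 → ZMod 17 → ℤ :=
  ![symmSign {1, 4, 5, 6, 8}, symmSign {3, 5, 6, 7}, symmSign {1, 3, 4, 5, 6, 7},
    symmSign {1, 2, 3, 4, 7}]

/-- A Hadamard matrix of order `68`. -/
def hadamard68 : Matrix (Fin 4 × ZMod 17) (Fin 4 × ZMod 17) ℤ :=
  williamson fun t ↦ circulant (williamsonSeq t)

theorem isHadamard_hadamard68 : hadamard68.IsHadamard := by
  refine isHadamard_williamson_circulant (fun t i ↦ ?_) (fun t i ↦ ?_) (by decide +kernel)
    (.of_ne_zero (by simp))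
  · fin_cases t <;> exact symmSign_mem_unitary _ _
  · fin_cases t <;> exact symmSign_neg _ _

/-- Three rows of `hadamard68` with a large normalized excess, found by computer search. -/
def excessRows : Fin 3 → Fin 4 × ZMod 17 :=
  ![(0, 0), (0, 1), (3, 0)]

theorem injective_excessRows : excessRows.Injective := by
  decide

theorem normalizedExcess_hadamard68 : normalizedExcess hadamard68 excessRows = 484 := by
  decide +kernel

end Order68

end MaxDet

theorem stmt_13 :
    (∃ M : Matrix (Fin 69) (Fin 69) ℤ,
      (∀ i j, M i j = 1 ∨ M i j = -1) ∧ M.det = 2^68 * 17^33 * 155) ∧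
    (2^68 * 17^33 * 155 : ℤ) ≤ md 69 := by
  obtain ⟨M, hM, hdet⟩ := MaxDet.exists_det_eq_of_isHadamard (t := 34) (by decide)
    MaxDet.isHadamard_hadamard68 MaxDet.injective_excessRows
  rw [MaxDet.normalizedExcess_hadamard68] at hdet
  have det_eq : M.det = 2^68 * 17^33 * 155 := by
    norm_num at hdet ⊢
    linarith
  exact ⟨⟨M, hM, det_eq⟩, det_eq ▸ MaxDet.det_le_md hM⟩
end
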